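/- Let φ be the automorphism of the free group F₃ on generators a, b, c determined by a ↦ c·a, b ↦ a·b, c ↦ b⁻¹·a·b, and for each natural number k ≥ 1 let φ_k be the automorphism of the free group F_{k+3} on generators s₁, s₂, t₁, …, t_{k+1} determined by s₁ ↦ t₁, s₂ ↦ s₂·t₁, t_i ↦ t_{i+1} for 1 ≤ i ≤ k, and t_{k+1} ↦ s₂·s₁·t₁·s₂⁻¹. Then for every k ≥ 1 the semidirect product F_{k+3} ⋊_{φ_k} ℤ is isomorphic to F₃ ⋊_φ ℤ. In particular, the free-by-cyclic group G = F₃ ⋊_φ ℤ splits as a free-by-cyclic group with free kernel of rank k + 3 for every k ≥ 1. -/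

import Mathlib

/-! Conjugating by the stable letter turns each `t_i` into `u ^ i * s₁ * u ^ (-i)`, so `F_{k+3} ⋊ ℤ`
is generated by `s = s₁`, `z = s₂` and the stable letter `u`, subject only to
`z * (u s u⁻¹) = u z u⁻¹` and `z s (u s u⁻¹) z⁻¹ = u ^ (k + 2) * s * u ^ (-(k + 2))`.
Replacing `z` by `u ^ (m - k) * z` turns these relations into those for `m`, so
the group does not depend on `k`, and the formulas for
`φ_k` make sense for `k = 0`. There, with `s₁ = c`, `s₂ = b`, `t₁ = a`, they describe `φ` followed
by conjugation by `b`, and automorphisms that differ by an inner one have isomorphic mapping tori.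
-/

/-- The mapping torus group `N ⋊_ψ ℤ` of an automorphism `ψ` of a group `N`, with `ℤ` written
as `Multiplicative ℤ`. -/
abbrev MappingTorus {N : Type*} [Group N] (ψ : MulAut N) : Type _ :=
  N ⋊[zpowersHom (MulAut N) ψ] Multiplicative ℤ

namespace MappingTorus

open SemidirectProduct

variable {N N' H : Type*} [Group N] [Group N'] [Group H] {ψ : MulAut N} {ψ' : MulAut N'}

/-- The stable letter of the mapping torus: the generator of the factor `ℤ` whose conjugation
action on the fiber `N` is `ψ`. -/
def stableLetter (ψ : MulAut N) : MappingTorus ψ :=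
  inr (Multiplicative.ofAdd 1)

theorem inl_apply_eq_conj (ψ : MulAut N) (x : N) :
    (inl (ψ x) : MappingTorus ψ) = stableLetter ψ * inl x * (stableLetter ψ)⁻¹ := by
  simpa [zpowersHom_apply, stableLetter] using
    inl_aut (φ := zpowersHom (MulAut N) ψ) (Multiplicative.ofAdd 1) x

theorem hom_ext {F F' : MappingTorus ψ →* H} (hinl : F.comp inl = F'.comp inl)
    (hstable : F (stableLetter ψ) = F' (stableLetter ψ)) : F = F' :=
  SemidirectProduct.hom_ext hinl (MonoidHom.ext_mint hstable)

theorem map_zpow_apply_eq_conj {f : N →* H} {w : H} (h : ∀ x, f (ψ x) = w * f x * w⁻¹)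
    (n : ℤ) (x : N) : f ((ψ ^ n) x) = w ^ n * f x * (w ^ n)⁻¹ := by
  have h_inv (y : N) : f (ψ⁻¹ y) = w⁻¹ * f y * w := by
    rw [← MulAut.apply_inv_self N ψ y, h, MulAut.apply_inv_self]
    group
  induction n generalizing x with
  | zero => simp
  | succ n ih =>
    rw [zpow_add_one, MulAut.mul_apply, ih, h, zpow_add_one]
    group
  | pred n ih =>
    rw [zpow_sub_one, MulAut.mul_apply, ih, h_inv, zpow_sub_one]
    group

/-- The universal property of the mapping torus: a homomorphism on the fiber extends once an image
`w` of the stable letter is chosen whose conjugation action realizes `ψ`. -/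
def lift (f : N →* H) (w : H) (h : ∀ x, f (ψ x) = w * f x * w⁻¹) : MappingTorus ψ →* H :=
  SemidirectProduct.lift f (zpowersHom H w) fun n => MonoidHom.ext fun x => by
    simpa [zpowersHom_apply, ← map_zpow] using map_zpow_apply_eq_conj h n.toAdd x

section Lift

variable {f : N →* H} {w : H} (h : ∀ x, f (ψ x) = w * f x * w⁻¹)

@[simp]
theorem lift_inl (x : N) : lift f w h (inl x) = f x :=
  SemidirectProduct.lift_inl ..

@[simp]
theorem lift_stableLetter : lift f w h (stableLetter ψ) = w := by
  simp [lift, stableLetter, zpowersHom_apply]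

end Lift

/-- Automorphisms that agree, after transport along `e`, up to the inner automorphism of `g` have
isomorphic mapping tori: the stable letter of `ψ` goes to `g` times the stable letter of `ψ'`. -/
def congr (e : N ≃* N') (g : N') (h : ∀ x, e (ψ x) = g * ψ' (e x) * g⁻¹) :
    MappingTorus ψ ≃* MappingTorus ψ' :=
  MonoidHom.toMulEquiv
    (lift (inl.comp e.toMonoidHom) (inl g * stableLetter ψ') fun x => by
      simp [h, inl_apply_eq_conj, mul_assoc])
    (lift (inl.comp e.symm.toMonoidHom) (inl (e.symm g⁻¹) * stableLetter ψ) fun y => by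
      have h_symm : e.symm (ψ' y) = e.symm g⁻¹ * ψ (e.symm y) * e.symm g := by
        apply e.injective
        simp [h, mul_assoc]
      simp [h_symm, inl_apply_eq_conj, mul_assoc])
    (hom_ext (MonoidHom.ext fun x => by simp) (by simp))
    (hom_ext (MonoidHom.ext fun y => by simp) (by simp))

end MappingTorus

/-- The defining equations of the automorphism `φ_k` of `F_{k+3}`, with `s₁ = of (inl 0)`,
`s₂ = of (inl 1)` and `t_{j+1} = of (inr j)`. -/
structure IsSplittingMonodromy (k : ℕ) (ψ : MulAut (FreeGroup (Fin 2 ⊕ Fin (k + 1)))) : Prop where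
  apply_s₁ : ψ (.of (.inl 0)) = .of (.inr 0)
  apply_s₂ : ψ (.of (.inl 1)) = .of (.inl 1) * .of (.inr 0)
  apply_t_castSucc (j : Fin k) : ψ (.of (.inr j.castSucc)) = .of (.inr j.succ)
  apply_t_last : ψ (.of (.inr (Fin.last k))) =
    .of (.inl 1) * .of (.inl 0) * .of (.inr 0) * (.of (.inl 1))⁻¹

/-- The relations between `s = s₁`, `z = s₂` and the stable letter `u` that present the mapping
torus of `φ_n` once the generators `t_i = u ^ i * s * u ^ (-i)` are eliminated. -/
structure SplittingRelations {H : Type*} [Group H] (n : ℤ) (s z u : H) : Prop where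
  mul_conj : z * (u * s * u⁻¹) = u * z * u⁻¹
  conj_mul_conj : z * s * (u * s * u⁻¹) * z⁻¹ = u ^ (n + 2) * s * (u ^ (n + 2))⁻¹

theorem SplittingRelations.zpow_mul {H : Type*} [Group H] {n : ℤ} {s z u : H}
    (h : SplittingRelations n s z u) (m : ℤ) : SplittingRelations (m + n) s (u ^ m * z) u where
  mul_conj := by
    rw [mul_assoc, h.mul_conj]
    group
  conj_mul_conj := by
    calc u ^ m * z * s * (u * s * u⁻¹) * (u ^ m * z)⁻¹
        = u ^ m * (z * s * (u * s * u⁻¹) * z⁻¹) * (u ^ m)⁻¹ := by group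
      _ = u ^ (m + n + 2) * s * (u ^ (m + n + 2))⁻¹ := by
        rw [h.conj_mul_conj]
        group

namespace IsSplittingMonodromy

open MappingTorus SemidirectProduct

variable {H : Type*} [Group H] {k m : ℕ} {ψ : MulAut (FreeGroup (Fin 2 ⊕ Fin (k + 1)))}
  {χ : MulAut (FreeGroup (Fin 2 ⊕ Fin (m + 1)))}

theorem inl_t (hψ : IsSplittingMonodromy k ψ) (j : Fin (k + 1)) :
    (inl (.of (.inr j)) : MappingTorus ψ) =
      stableLetter ψ ^ ((j : ℤ) + 1) * inl (.of (.inl 0)) *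
        (stableLetter ψ ^ ((j : ℤ) + 1))⁻¹ := by
  induction j using Fin.induction with
  | zero => simp [← hψ.apply_s₁, inl_apply_eq_conj]
  | succ j ih =>
    rw [← hψ.apply_t_castSucc, inl_apply_eq_conj, ih, Fin.val_succ, Fin.val_castSucc]
    push_cast
    group

theorem splittingRelations (hψ : IsSplittingMonodromy k ψ) :
    SplittingRelations (k : ℤ) (inl (.of (.inl 0)) : MappingTorus ψ) (inl (.of (.inl 1)))
      (stableLetter ψ) where
  mul_conj := by
    rw [← inl_apply_eq_conj, ← inl_apply_eq_conj, hψ.apply_s₁, hψ.apply_s₂, map_mul]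
  conj_mul_conj := by
    have h_last := inl_apply_eq_conj ψ (.of (.inr (Fin.last k)))
    rw [hψ.apply_t_last, hψ.inl_t, Fin.val_last] at h_last
    rw [← inl_apply_eq_conj, hψ.apply_s₁]
    simp only [map_mul, map_inv] at h_last
    rw [h_last]
    group

theorem hom_ext (hψ : IsSplittingMonodromy k ψ) {F F' : MappingTorus ψ →* H}
    (hs : F (inl (.of (.inl 0))) = F' (inl (.of (.inl 0))))
    (hz : F (inl (.of (.inl 1))) = F' (inl (.of (.inl 1))))
    (hu : F (stableLetter ψ) = F' (stableLetter ψ)) : F = F' := by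
  refine MappingTorus.hom_ext (FreeGroup.ext_hom _ _ fun x => ?_) hu
  rcases x with i | j
  · fin_cases i
    · exact hs
    · exact hz
  · simp [hψ.inl_t, hs, hu]

/-- The images of the free generators `s₁, s₂, t₁, …, t_{k+1}` under the homomorphism out of the
mapping torus of `φ_k` determined by `s₁ ↦ s`, `s₂ ↦ z` and stable letter `↦ u`. -/
def generatorImage (k : ℕ) (s z u : H) : Fin 2 ⊕ Fin (k + 1) → H :=
  Sum.elim ![s, z] fun j => u ^ ((j : ℤ) + 1) * s * (u ^ ((j : ℤ) + 1))⁻¹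

theorem lift_generatorImage_apply (hψ : IsSplittingMonodromy k ψ) {s z u : H}
    (h : SplittingRelations k s z u) (x : FreeGroup (Fin 2 ⊕ Fin (k + 1))) :
    FreeGroup.lift (generatorImage k s z u) (ψ x) =
      u * FreeGroup.lift (generatorImage k s z u) x * u⁻¹ := by
  suffices h_comp : (FreeGroup.lift (generatorImage k s z u)).comp ψ.toMonoidHom =
      (MulAut.conj u).toMonoidHom.comp (FreeGroup.lift (generatorImage k s z u)) from
    DFunLike.congr_fun h_comp x
  refine FreeGroup.ext_hom _ _ fun y => ?_
  rcases y with i | j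
  · fin_cases i
    · simp [hψ.apply_s₁, generatorImage]
    · simpa [hψ.apply_s₂, generatorImage] using h.mul_conj
  · cases j using Fin.lastCases with
    | last =>
      have h_last : z * s * (u * s * u⁻¹) * z⁻¹ =
          u * (u ^ ((k : ℤ) + 1) * s * (u ^ ((k : ℤ) + 1))⁻¹) * u⁻¹ := by
        rw [h.conj_mul_conj]
        group
      simpa [hψ.apply_t_last, generatorImage, -mul_inv_rev] using h_last
    | cast j =>
      simp only [MonoidHom.comp_apply, MulEquiv.coe_toMonoidHom, hψ.apply_t_castSucc,
        FreeGroup.lift_apply_of, generatorImage, Sum.elim_inr, MulAut.conj_apply, Fin.val_succ,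
        Fin.val_castSucc]
      push_cast
      group

/-- The homomorphism out of the mapping torus of `φ_k` with `s₁ ↦ s`, `s₂ ↦ z` and stable letter
`↦ u`, for any `s, z, u` satisfying the relations of `SplittingRelations k`. -/
def lift (hψ : IsSplittingMonodromy k ψ) {s z u : H} (h : SplittingRelations k s z u) :
    MappingTorus ψ →* H :=
  MappingTorus.lift (FreeGroup.lift (generatorImage k s z u)) u (hψ.lift_generatorImage_apply h)

section Lift

variable (hψ : IsSplittingMonodromy k ψ) {s z u : H} (h : SplittingRelations k s z u)

@[simp]
theorem lift_s₁ : hψ.lift h (inl (.of (.inl 0))) = s := by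
  simp [lift, generatorImage]

@[simp]
theorem lift_s₂ : hψ.lift h (inl (.of (.inl 1))) = z := by
  simp [lift, generatorImage]

@[simp]
theorem lift_stableLetter : hψ.lift h (stableLetter ψ) = u :=
  MappingTorus.lift_stableLetter _

end Lift

theorem splittingRelations_zpow_mul (hχ : IsSplittingMonodromy m χ) (k : ℕ) :
    SplittingRelations (k : ℤ) (inl (.of (.inl 0)) : MappingTorus χ)
      (stableLetter χ ^ ((k : ℤ) - m) * inl (.of (.inl 1))) (stableLetter χ) := by
  simpa using hχ.splittingRelations.zpow_mul ((k : ℤ) - m)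

/-- The mapping tori of `φ_k` and `φ_m` are isomorphic, by `s₁ ↦ s₁`, `u ↦ u` and
`s₂ ↦ u ^ (k - m) * s₂`. -/
def mappingTorusEquiv (hψ : IsSplittingMonodromy k ψ) (hχ : IsSplittingMonodromy m χ) :
    MappingTorus ψ ≃* MappingTorus χ :=
  MonoidHom.toMulEquiv (hψ.lift (hχ.splittingRelations_zpow_mul k))
    (hχ.lift (hψ.splittingRelations_zpow_mul m))
    (hψ.hom_ext (by simp) (by simp [← mul_assoc, ← zpow_add]) (by simp))
    (hχ.hom_ext (by simp) (by simp [← mul_assoc, ← zpow_add]) (by simp))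

end IsSplittingMonodromy

/-- The renaming `a = t₁`, `b = s₂`, `c = s₁` of the generators of `F₃` as those of the domain
of `φ_0`. -/
def generatorEquiv : Fin 3 ≃ Fin 2 ⊕ Fin 1 where
  toFun := ![.inr 0, .inl 1, .inl 0]
  invFun := Sum.elim ![2, 1] ![0]
  left_inv := by decide
  right_inv := by decide

theorem isSplittingMonodromy_zero_congr_conj_mul {φ : MulAut (FreeGroup (Fin 3))}
    (ha : φ (.of 0) = .of 2 * .of 0) (hb : φ (.of 1) = .of 0 * .of 1)
    (hc : φ (.of 2) = (.of 1)⁻¹ * .of 0 * .of 1) :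
    IsSplittingMonodromy 0 (MulAut.congr (FreeGroup.freeGroupCongr generatorEquiv)
      (MulAut.conj (.of 1) * φ)) where
  apply_s₁ := by simp [MulAut.congr, generatorEquiv, hc, mul_assoc]
  apply_s₂ := by simp [MulAut.congr, generatorEquiv, hb, mul_assoc]
  apply_t_castSucc j := j.elim0
  apply_t_last := by simp [MulAut.congr, generatorEquiv, ha, mul_assoc]

/-- Each `φ_k` (k ≥ 1) is a monodromy of a splitting of `G = F₃ ⋊_φ ℤ`:
the mapping torus groups `F_{k+3} ⋊_{φ_k} ℤ` are all isomorphic to `F₃ ⋊_φ ℤ`.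
Here `φ : a ↦ ca, b ↦ ab, c ↦ b⁻¹ab` on `FreeGroup (Fin 3)` (`a = of 0`,
`b = of 1`, `c = of 2`), and `φ_k` is defined on the free group on
`Fin 2 ⊕ Fin (k+1)` (`s₁ = of (inl 0)`, `s₂ = of (inl 1)`,
`t_{j+1} = of (inr j)`) by `s₁ ↦ t₁`, `s₂ ↦ s₂t₁`, `t_i ↦ t_{i+1}` for
`1 ≤ i ≤ k`, `t_{k+1} ↦ s₂s₁t₁s₂⁻¹`. -/
theorem stmt7 (k : ℕ) (hk : 1 ≤ k)
    (φ : FreeGroup (Fin 3) ≃* FreeGroup (Fin 3))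
    (ha : φ (FreeGroup.of 0) = FreeGroup.of 2 * FreeGroup.of 0)
    (hb : φ (FreeGroup.of 1) = FreeGroup.of 0 * FreeGroup.of 1)
    (hc : φ (FreeGroup.of 2) = (FreeGroup.of 1)⁻¹ * FreeGroup.of 0 * FreeGroup.of 1)
    (φk : FreeGroup (Fin 2 ⊕ Fin (k + 1)) ≃* FreeGroup (Fin 2 ⊕ Fin (k + 1)))
    (hs1 : φk (FreeGroup.of (Sum.inl 0)) = FreeGroup.of (Sum.inr 0))
    (hs2 : φk (FreeGroup.of (Sum.inl 1)) =
      FreeGroup.of (Sum.inl 1) * FreeGroup.of (Sum.inr 0))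
    (ht : ∀ j : Fin (k + 1), ∀ h : (j : ℕ) < k,
      φk (FreeGroup.of (Sum.inr j)) =
        FreeGroup.of (Sum.inr (⟨(j : ℕ) + 1, by omega⟩ : Fin (k + 1))))
    (htk : φk (FreeGroup.of (Sum.inr (⟨k, by omega⟩ : Fin (k + 1)))) =
      FreeGroup.of (Sum.inl 1) * FreeGroup.of (Sum.inl 0) *
        FreeGroup.of (Sum.inr 0) * (FreeGroup.of (Sum.inl 1))⁻¹) :
    Nonempty
      ((FreeGroup (Fin 2 ⊕ Fin (k + 1))
          ⋊[zpowersHom (MulAut (FreeGroup (Fin 2 ⊕ Fin (k + 1))))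
              (φk : MulAut (FreeGroup (Fin 2 ⊕ Fin (k + 1))))]
          Multiplicative ℤ) ≃*
       (FreeGroup (Fin 3)
          ⋊[zpowersHom (MulAut (FreeGroup (Fin 3))) (φ : MulAut (FreeGroup (Fin 3)))]
          Multiplicative ℤ)) := by
  let e := FreeGroup.freeGroupCongr generatorEquiv
  let φ₀ : MulAut (FreeGroup (Fin 2 ⊕ Fin 1)) := MulAut.congr e (MulAut.conj (.of 1) * φ)
  have hφ₀ : IsSplittingMonodromy 0 φ₀ :=
    isSplittingMonodromy_zero_congr_conj_mul ha hb hc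
  have hφk : IsSplittingMonodromy k φk :=
    ⟨hs1, hs2, fun j => ht j.castSucc j.is_lt, htk⟩
  have h_conj (x) : e.symm (φ₀ x) = .of 1 * φ (e.symm x) * (.of 1)⁻¹ := by
    simp [φ₀]
  exact ⟨(hφk.mappingTorusEquiv hφ₀).trans (MappingTorus.congr e.symm (.of 1) h_conj)⟩
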